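/- arXiv:2502.17031 — 2 statements merged into one kernel-verified Lean document; each statement's English description precedes it below -/
import Mathlib

section
/- Let s = i·√3 ∈ ℂ (a square root of −3). The derivation module D(𝒜_𝔄) of the central hyperplane arrangement 𝒜_𝔄 in ℂ⁴ with defining equation Q_𝔄 = x·y·z·w·(x+y)·(x+y+z−w)·((s−1)x−2y+(s−1)z)·(2y+(−s+1)z−2w) is not a free module over S = ℂ[x,y,z,w]. -/
open MvPolynomial

noncomputable section

/-- The polynomial ring `S = ℂ[x,y,z,w]`, with `x = X 0`, `y = X 1`, `z = X 2`, `w = X 3`. -/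
abbrev S4 : Type := MvPolynomial (Fin 4) ℂ

/-- The linear form `c₀·x + c₁·y + c₂·z + c₃·w` with coefficient vector `c`. -/
noncomputable def linForm (c : Fin 4 → ℂ) : S4 := ∑ i, C (c i) * X i

/-- A polynomial derivation `θ = a₁∂ₓ + a₂∂_y + a₃∂_z + a₄∂_w` of `S` is identified with
its coefficient tuple `a : Fin 4 → S`; the linear map `derMap f` sends `a` to `θ(f)`. -/
noncomputable def derMap (f : S4) : (Fin 4 → S4) →ₗ[S4] S4 where
  toFun a := ∑ i, a i * pderiv i f
  map_add' a b := by simp [add_mul, Finset.sum_add_distrib]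
  map_smul' c a := by simp [Finset.mul_sum, mul_assoc]

/-- The derivation module `D(𝒜)` of the central arrangement whose hyperplanes are the kernels
of the linear forms `linForm (α H)`: all derivations `θ` with `θ(α_H) ∈ S·α_H` for every `H`. -/
noncomputable def derivModule {ι : Type} (α : ι → (Fin 4 → ℂ)) :
    Submodule S4 (Fin 4 → S4) :=
  ⨅ H, Submodule.comap (derMap (linForm (α H))) (Ideal.span {linForm (α H)})

end

/-- `s = i·√3`, a square root of `-3`. -/
noncomputable def s : ℂ := Complex.I * Real.sqrt 3

/-- The coefficient vectors of the eight linear factors of Q = xyzw(x+y)(x+y+z-w)((s-1)x-2y+(s-1)z)(2y+(-s+1)z-2w), defining the rigid Cynk–Szemberg octic arrangement 𝒜_𝔄 ⊂ ℙ³. -/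
noncomputable def AFrakA : Fin 8 → (Fin 4 → ℂ) :=
  ![![1, 0, 0, 0],
    ![0, 1, 0, 0],
    ![0, 0, 1, 0],
    ![0, 0, 0, 1],
    ![1, 1, 0, 0],
    ![1, 1, 1, -1],
    ![s-1, -2, s-1, 0],
    ![0, 2, -s+1, -2]]

/-!
Call a point `p` of `ℂ⁴` bad if exactly four hyperplanes of the arrangement contain it, three of
them independent and the fourth of the form `∑ cⱼ βⱼ = 0` with all `cⱼ ≠ 0`. A bad point prevents
freeness: write `fⱼ = θ(βⱼ)/βⱼ` for `θ ∈ D(𝒜)`. Differentiating `∑ cⱼ fⱼ βⱼ ∈ (∑ cⱼ βⱼ)` at `p` along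
the dual vectors shows that the three `fⱼ` agree at `p`. Hence a coordinate of `θ`, the common value
of the `fⱼ`, and three directional derivatives of the differences `fⱼ₊₁ - fⱼ`, all taken at `p`, are
semilinear over evaluation at `p`. Explicit derivations built from Koszul syzygies, multiplied by
the forms not vanishing at `p`, show that these five numbers are arbitrary, whereas a free `D(𝒜)`
has rank at most four. For `𝒜_𝔄` the point `(1, -1, 0, 0)` is bad, through the relation
`x + y + z - w = z - w + (x + y)`.
-/

open Module

theorem finrank_le_finrank_of_surjective_semilinear {R K M V : Type*} [Semiring R]
    [StrongRankCondition R] [Semiring K] [StrongRankCondition K] [AddCommMonoid M] [Module R M]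
    [Module.Free R M] [Module.Finite R M] [AddCommMonoid V] [Module K V] {φ : R →+* K}
    (f : M →ₛₗ[φ] V) (hf : Function.Surjective f) : finrank K V ≤ finrank R M := by
  let b := Free.chooseBasis R M
  have hspan : Submodule.span K (Set.range (f ∘ b)) = ⊤ := by
    refine eq_top_iff.2 fun x _ => ?_
    obtain ⟨m, rfl⟩ := hf x
    rw [← b.sum_repr m, map_sum]
    refine Submodule.sum_mem _ fun i _ => ?_
    rw [map_smulₛₗ]
    exact Submodule.smul_mem _ _ (Submodule.subset_span ⟨i, rfl⟩)
  rw [finrank_eq_card_chooseBasisIndex R M]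
  exact finrank_le_of_span_eq_top hspan

theorem exists_dual_of_linearIndependent {K κ n : Type*} [Field K] [Finite κ] [DecidableEq κ]
    [Fintype n] {β : κ → n → K} (hβ : LinearIndependent K β) :
    ∃ v : κ → n → K, ∀ i j, β i ⬝ᵥ v j = if i = j then 1 else 0 := by
  have := Fintype.ofFinite κ
  have hsurj : Function.Surjective (Matrix.of β).mulVecLin := by
    rw [← LinearMap.range_eq_top]
    apply Submodule.eq_top_of_finrank_eq
    rw [finrank_fintype_fun_eq_card]
    exact hβ.rank_matrix
  choose v hv using fun j => hsurj (Pi.single j 1)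
  exact ⟨v, fun i j => (congrFun (hv j) i).trans (Pi.single_apply j 1 i)⟩

theorem exists_ne_zero_forall_dotProduct_eq_zero {K κ n : Type*} [Field K] [Fintype κ] [Fintype n]
    (h : Fintype.card κ < Fintype.card n) (β : κ → n → K) :
    ∃ u : n → K, u ≠ 0 ∧ ∀ j, β j ⬝ᵥ u = 0 := by
  have hker : LinearMap.ker (Matrix.of β).mulVecLin ≠ ⊥ :=
    LinearMap.ker_ne_bot_of_finrank_lt (by simpa using h)
  obtain ⟨u, hu, hu0⟩ := Submodule.exists_mem_ne_zero_of_ne_bot hker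
  exact ⟨u, hu0, congrFun hu⟩

theorem eval_linForm (c p : Fin 4 → ℂ) : eval p (linForm c) = c ⬝ᵥ p := by
  simp [linForm, dotProduct]

theorem linForm_ne_zero {c : Fin 4 → ℂ} (hc : c ≠ 0) : linForm c ≠ 0 := by
  intro h
  refine hc (dotProduct_eq_zero c fun p => ?_)
  rw [← eval_linForm, h, map_zero]

theorem linForm_sum_smul {κ : Type*} [Fintype κ] (c : κ → ℂ) (β : κ → Fin 4 → ℂ) :
    linForm (∑ j, c j • β j) = ∑ j, C (c j) * linForm (β j) := by
  simp only [linForm, Finset.sum_apply, Pi.smul_apply, smul_eq_mul, map_sum, map_mul,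
    Finset.sum_mul, Finset.mul_sum, mul_assoc]
  exact Finset.sum_comm

theorem derMap_linForm (c : Fin 4 → ℂ) (θ : Fin 4 → S4) :
    derMap (linForm c) θ = ∑ i, C (c i) * θ i := by
  simp [derMap, linForm, pderiv_X, Pi.single_apply, mul_comm]

theorem derMap_linForm_sum_smul {κ : Type*} [Fintype κ] (c : κ → ℂ) (β : κ → Fin 4 → ℂ)
    (θ : Fin 4 → S4) :
    derMap (linForm (∑ j, c j • β j)) θ = ∑ j, C (c j) * derMap (linForm (β j)) θ := by
  simp only [derMap_linForm, Finset.sum_apply, Pi.smul_apply, smul_eq_mul, map_sum, map_mul,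
    Finset.sum_mul, Finset.mul_sum, mul_assoc]
  exact Finset.sum_comm

/-- The constant derivation `∑ vᵢ ∂ᵢ`, as a coefficient tuple. -/
noncomputable def constDer (v : Fin 4 → ℂ) : Fin 4 → S4 := fun i => C (v i)

theorem derMap_linForm_constDer (c v : Fin 4 → ℂ) :
    derMap (linForm c) (constDer v) = C (c ⬝ᵥ v) := by
  simp [derMap_linForm, constDer, dotProduct]

/-- The directional derivative along `v`, that is, the constant derivation `constDer v` in
Mathlib's encoding of derivations. -/
noncomputable def dirDeriv (v : Fin 4 → ℂ) : Derivation ℂ S4 S4 := mkDerivation ℂ (constDer v)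

theorem dirDeriv_linForm (v c : Fin 4 → ℂ) : dirDeriv v (linForm c) = C (c ⬝ᵥ v) := by
  simp [dirDeriv, constDer, linForm, dotProduct]

theorem eval_dirDeriv_mul_of_eval_eq_zero {p : Fin 4 → ℂ} {g : S4} (hg : eval p g = 0)
    (v : Fin 4 → ℂ) (q : S4) :
    eval p (dirDeriv v (q * g)) = eval p q * eval p (dirDeriv v g) := by
  simp [hg]

theorem mem_derivModule {ι : Type} {α : ι → Fin 4 → ℂ} {θ : Fin 4 → S4} :
    θ ∈ derivModule α ↔ ∀ i, linForm (α i) ∣ derMap (linForm (α i)) θ := by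
  simp [derivModule, Submodule.mem_iInf, Ideal.mem_span_singleton]

theorem exists_smul_mem_derivModule {ι : Type} [Finite ι] (α : ι → Fin 4 → ℂ) (p : Fin 4 → ℂ) :
    ∃ q : S4, eval p q ≠ 0 ∧ ∀ θ : Fin 4 → S4,
      (∀ i, α i ⬝ᵥ p = 0 → linForm (α i) ∣ derMap (linForm (α i)) θ) → q • θ ∈ derivModule α := by
  classical
  have := Fintype.ofFinite ι
  refine ⟨∏ i with α i ⬝ᵥ p ≠ 0, linForm (α i), ?_, fun θ hθ => mem_derivModule.2 fun i => ?_⟩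
  · simp [map_prod, eval_linForm, Finset.prod_eq_zero_iff]
  · rw [(derMap _).map_smul, smul_eq_mul]
    by_cases hi : α i ⬝ᵥ p = 0
    · exact (hθ i hi).mul_left _
    · exact (Finset.dvd_prod_of_mem (fun i => linForm (α i)) (by simpa using hi)).mul_right _

theorem exists_linearMap_mul_eq_of_dvd {R M : Type*} [CommRing R] [IsDomain R] [AddCommGroup M]
    [Module R M] (f : M →ₗ[R] R) {a : R} (ha : a ≠ 0) (h : ∀ m, a ∣ f m) :
    ∃ g : M →ₗ[R] R, ∀ m, g m * a = f m :=
  ⟨(LinearEquiv.toSpanNonzeroSingleton R R a ha).symm.toLinearMap ∘ₗ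
      f.codRestrict (Submodule.span R {a}) fun m => Ideal.mem_span_singleton.2 (h m),
    fun m => LinearEquiv.toSpanNonzeroSingleton_symm_apply_smul R R a ha ⟨f m, _⟩⟩

theorem exists_logQuotient {ι : Type} {α : ι → Fin 4 → ℂ} {i : ι} (hi : α i ≠ 0) :
    ∃ f : derivModule α →ₗ[S4] S4,
      ∀ θ : derivModule α, f θ * linForm (α i) = derMap (linForm (α i)) θ :=
  exists_linearMap_mul_eq_of_dvd (derMap (linForm (α i)) ∘ₗ (derivModule α).subtype)
    (linForm_ne_zero hi) fun θ => mem_derivModule.1 θ.2 i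

theorem eval_eq_of_dvd_sum {κ : Type*} [Fintype κ] [DecidableEq κ] {β v : κ → Fin 4 → ℂ}
    (hv : ∀ i j, β i ⬝ᵥ v j = if i = j then 1 else 0) {p : Fin 4 → ℂ} (hp : ∀ j, β j ⬝ᵥ p = 0)
    {c : κ → ℂ} (hc : ∀ j, c j ≠ 0) {f : κ → S4}
    (h : linForm (∑ j, c j • β j) ∣ ∑ j, C (c j) * (f j * linForm (β j))) (i j : κ) :
    eval p (f i) = eval p (f j) := by
  obtain ⟨r, hr⟩ := h
  have key (k : κ) : eval p (f k) = eval p r := by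
    have hk := congrArg (fun q => eval p (dirDeriv (v k) q)) hr
    simp only [linForm_sum_smul, map_sum, Derivation.leibniz, dirDeriv_linForm, hv, derivation_C,
      smul_eq_mul, map_add, map_mul, eval_C, eval_linForm, hp] at hk
    exact mul_left_cancel₀ (hc k) (by simpa [mul_comm] using hk)
  rw [key i, key j]

/-- The derivation `∑ gⱼ βⱼ ∂_{vⱼ}`. -/
noncomputable def diagonalDer {κ : Type*} [Fintype κ] (β v : κ → Fin 4 → ℂ) (g : κ → S4) :
    Fin 4 → S4 :=
  ∑ j, (g j * linForm (β j)) • constDer (v j)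

theorem derMap_linForm_diagonalDer {κ : Type*} [Fintype κ] [DecidableEq κ] {β v : κ → Fin 4 → ℂ}
    (hv : ∀ i j, β i ⬝ᵥ v j = if i = j then 1 else 0) (g : κ → S4) (i : κ) :
    derMap (linForm (β i)) (diagonalDer β v g) = g i * linForm (β i) := by
  simp only [diagonalDer, map_sum, (derMap _).map_smul, derMap_linForm_constDer, hv]
  simp

theorem eval_diagonalDer {κ : Type*} [Fintype κ] {β : κ → Fin 4 → ℂ} {p : Fin 4 → ℂ}
    (hp : ∀ j, β j ⬝ᵥ p = 0) (v : κ → Fin 4 → ℂ) (g : κ → S4) (m : Fin 4) :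
    eval p (diagonalDer β v g m) = 0 := by
  simp [diagonalDer, eval_linForm, hp]

section Koszul

variable (β v : Fin 3 → Fin 4 → ℂ) (u : Fin 4 → ℂ) (c : Fin 3 → ℂ) (b : ℂ) (w : Fin 3 → ℂ)

/-- Three polynomials `gⱼ` with `∑ cⱼ gⱼ βⱼ = b ∑ cⱼ βⱼ`: the constant solution `b` plus a
combination of the Koszul syzygies of the forms `cⱼ βⱼ`, with weights `w`. They are the quotients
`θ(βⱼ)/βⱼ` prescribed for `circuitDer`. Indices are taken modulo 3. -/
noncomputable def koszulQuotient (j : Fin 3) : S4 :=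
  C b + C (w (j + 2) * c (j + 2)) * linForm (β (j + 2)) - C (w j * c (j + 1)) * linForm (β (j + 1))

/-- When `v` is dual to `β` and `u` is killed by `β`, this derivation is tangent to the four
hyperplanes `βⱼ = 0` and `∑ cⱼ βⱼ = 0`. The parameters `u`, `b` and `w` are free, so that its values
under `fibreMap` fill the target. -/
noncomputable def circuitDer : Fin 4 → S4 :=
  diagonalDer β v (koszulQuotient β c b w) + constDer u

theorem sum_koszulQuotient_mul :
    ∑ j, C (c j) * (koszulQuotient β c b w j * linForm (β j)) =
      C b * linForm (∑ j, c j • β j) := by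
  rw [linForm_sum_smul]
  simp only [koszulQuotient, Fin.sum_univ_three, map_mul, Fin.reduceAdd]
  ring

variable {β v u} {p : Fin 4 → ℂ}

theorem eval_koszulQuotient (hp : ∀ j, β j ⬝ᵥ p = 0) (j : Fin 3) :
    eval p (koszulQuotient β c b w j) = b := by
  simp [koszulQuotient, eval_linForm, hp]

theorem dirDeriv_koszulQuotient_sub (hv : ∀ i j, β i ⬝ᵥ v j = if i = j then 1 else 0)
    (j : Fin 3) :
    dirDeriv (v j) (koszulQuotient β c b w (j + 1) - koszulQuotient β c b w j) =
      C (w j * c j) := by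
  fin_cases j <;> simp [koszulQuotient, dirDeriv_linForm, hv]

theorem derMap_linForm_circuitDer (hv : ∀ i j, β i ⬝ᵥ v j = if i = j then 1 else 0)
    (hu : ∀ j, β j ⬝ᵥ u = 0) (j : Fin 3) :
    derMap (linForm (β j)) (circuitDer β v u c b w) =
      koszulQuotient β c b w j * linForm (β j) := by
  rw [circuitDer, map_add, derMap_linForm_diagonalDer hv, derMap_linForm_constDer, hu, map_zero,
    add_zero]

theorem derMap_linForm_sum_circuitDer (hv : ∀ i j, β i ⬝ᵥ v j = if i = j then 1 else 0)
    (hu : ∀ j, β j ⬝ᵥ u = 0) :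
    derMap (linForm (∑ j, c j • β j)) (circuitDer β v u c b w) =
      C b * linForm (∑ j, c j • β j) := by
  simp only [derMap_linForm_sum_smul, derMap_linForm_circuitDer c b w hv hu, sum_koszulQuotient_mul]

theorem eval_circuitDer (hp : ∀ j, β j ⬝ᵥ p = 0) (m : Fin 4) :
    eval p (circuitDer β v u c b w m) = u m := by
  simp [circuitDer, constDer, eval_diagonalDer hp]

end Koszul

section Fibre

variable {M : Type*} [AddCommGroup M] [Module S4 M] (p : Fin 4 → ℂ) (v : Fin 3 → Fin 4 → ℂ)
  (t : M →ₗ[S4] S4) (f : Fin 3 → M →ₗ[S4] S4) (hf : ∀ x i j, eval p (f i x) = eval p (f j x))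

/-- Five numerical invariants at `p` of an element of `M = D(𝒜)`, where `t` is a coordinate and the
`fⱼ` are the quotients `θ(βⱼ)/βⱼ`. They are semilinear over evaluation at `p`, the last three
because the `fⱼ` agree at `p`, so they factor through the fibre of `M` at `p`. -/
noncomputable def fibreMap : M →ₛₗ[eval p] ℂ × ℂ × (Fin 3 → ℂ) where
  toFun x := (eval p (t x), eval p (f 0 x), fun j => eval p (dirDeriv (v j) (f (j + 1) x - f j x)))
  map_add' x y := by
    simp only [map_add, add_sub_add_comm]
    rfl
  map_smul' q x := by
    have hsub (j : Fin 3) : eval p (f (j + 1) x - f j x) = 0 := by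
      rw [map_sub, hf x (j + 1) j, sub_self]
    simp only [map_smul, smul_eq_mul, ← mul_sub, eval_dirDeriv_mul_of_eval_eq_zero (hsub _),
      map_mul]
    rfl

theorem fibreMap_apply (x : M) :
    fibreMap p v t f hf x =
      (eval p (t x), eval p (f 0 x), fun j => eval p (dirDeriv (v j) (f (j + 1) x - f j x))) :=
  rfl

end Fibre

section Circuit

variable {ι : Type} {α : ι → Fin 4 → ℂ} {e : Fin 3 → ι} {k : ι} {c : Fin 3 → ℂ}
  {p u : Fin 4 → ℂ} {v : Fin 3 → Fin 4 → ℂ} {f : Fin 3 → derivModule α →ₗ[S4] S4}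

theorem fibreMap_smul_circuitDer (hp : ∀ j, (α ∘ e) j ⬝ᵥ p = 0)
    (hv : ∀ i j, (α ∘ e) i ⬝ᵥ v j = if i = j then 1 else 0) (hu : ∀ j, (α ∘ e) j ⬝ᵥ u = 0)
    (hf : ∀ j θ, f j θ * linForm (α (e j)) = derMap (linForm (α (e j))) θ)
    (hfp : ∀ θ i j, eval p (f i θ) = eval p (f j θ)) (m : Fin 4) {q : S4} {b : ℂ}
    {w : Fin 3 → ℂ} (hmem : q • circuitDer (α ∘ e) v u c b w ∈ derivModule α) :
    fibreMap p v (LinearMap.proj m ∘ₗ (derivModule α).subtype) f hfp ⟨_, hmem⟩ =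
      eval p q • (u m, b, fun j => w j * c j) := by
  have hquot (j : Fin 3) : f j ⟨_, hmem⟩ = q * koszulQuotient (α ∘ e) c b w j := by
    have hne : α (e j) ≠ 0 := fun h => by simpa [h] using hv j j
    apply mul_right_cancel₀ (linForm_ne_zero hne)
    rw [hf, (derMap _).map_smul, smul_eq_mul, mul_assoc]
    exact congrArg (q * ·) (derMap_linForm_circuitDer c b w hv hu j)
  have hsub (j : Fin 3) :
      eval p (koszulQuotient (α ∘ e) c b w (j + 1) - koszulQuotient (α ∘ e) c b w j) = 0 := by
    rw [map_sub, eval_koszulQuotient c b w hp, eval_koszulQuotient c b w hp, sub_self]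
  refine Prod.ext ?_ (Prod.ext ?_ (funext fun j => ?_)) <;> rw [fibreMap_apply]
  · simp [eval_circuitDer c b w hp]
  · simp [hquot, eval_koszulQuotient c b w hp]
  · simp only [hquot, ← mul_sub, eval_dirDeriv_mul_of_eval_eq_zero (hsub j),
      dirDeriv_koszulQuotient_sub c b w hv, eval_C]
    rfl

variable [Finite ι]

theorem exists_smul_circuitDer_mem_derivModule (hk : α k = ∑ j, c j • (α ∘ e) j)
    (hp : ∀ i, α i ⬝ᵥ p = 0 → i = k ∨ i ∈ Set.range e)
    (hv : ∀ i j, (α ∘ e) i ⬝ᵥ v j = if i = j then 1 else 0) :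
    ∃ q : S4, eval p q ≠ 0 ∧ ∀ u b w, (∀ j, (α ∘ e) j ⬝ᵥ u = 0) →
      q • circuitDer (α ∘ e) v u c b w ∈ derivModule α := by
  obtain ⟨q, hq, hmem⟩ := exists_smul_mem_derivModule α p
  refine ⟨q, hq, fun u b w hu => hmem _ fun i hi => ?_⟩
  rcases hp i hi with rfl | ⟨j, rfl⟩
  · rw [hk, derMap_linForm_sum_circuitDer c b w hv hu]
    exact dvd_mul_left _ _
  · exact Dvd.intro_left _ (derMap_linForm_circuitDer c b w hv hu j).symm

theorem fibreMap_surjective {m : Fin 4} (hk : α k = ∑ j, c j • (α ∘ e) j) (hc : ∀ j, c j ≠ 0)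
    (hp : ∀ i, α i ⬝ᵥ p = 0 ↔ i = k ∨ i ∈ Set.range e)
    (hv : ∀ i j, (α ∘ e) i ⬝ᵥ v j = if i = j then 1 else 0)
    (hu : ∀ j, (α ∘ e) j ⬝ᵥ u = 0) (hm : u m ≠ 0)
    (hf : ∀ j θ, f j θ * linForm (α (e j)) = derMap (linForm (α (e j))) θ)
    (hfp : ∀ θ i j, eval p (f i θ) = eval p (f j θ)) :
    Function.Surjective (fibreMap p v (LinearMap.proj m ∘ₗ (derivModule α).subtype) f hfp) := by
  rintro ⟨a, b, z⟩
  obtain ⟨q, hq, hmem⟩ := exists_smul_circuitDer_mem_derivModule hk (fun i => (hp i).1) hv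
  have hu' (j : Fin 3) : (α ∘ e) j ⬝ᵥ (a / (eval p q * u m)) • u = 0 := by
    rw [dotProduct_smul, hu, smul_zero]
  have hmem' := hmem _ (b / eval p q) (fun j => z j / (eval p q * c j)) hu'
  refine ⟨⟨_, hmem'⟩, ?_⟩
  rw [fibreMap_smul_circuitDer (fun j => (hp _).2 (.inr ⟨j, rfl⟩)) hv hu' hf]
  refine Prod.ext ?_ (Prod.ext ?_ (funext fun j => ?_))
  · simp only [Prod.smul_fst, Pi.smul_apply, smul_eq_mul]
    field_simp
  · exact mul_div_cancel₀ b hq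
  · have hcj := hc j
    simp only [Prod.smul_snd, Pi.smul_apply, smul_eq_mul]
    field_simp

theorem not_free_derivModule_of_circuit (he : LinearIndependent ℂ (α ∘ e))
    (hk : α k = ∑ j, c j • (α ∘ e) j) (hc : ∀ j, c j ≠ 0)
    (hp : ∀ i, α i ⬝ᵥ p = 0 ↔ i = k ∨ i ∈ Set.range e) :
    ¬ Module.Free S4 (derivModule α) := by
  intro hfree
  obtain ⟨v, hv⟩ := exists_dual_of_linearIndependent he
  obtain ⟨u, hu0, hu⟩ := exists_ne_zero_forall_dotProduct_eq_zero (by simp) (α ∘ e)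
  obtain ⟨m, hm⟩ := Function.ne_iff.1 hu0
  choose f hf using fun j => exists_logQuotient (α := α) (he.ne_zero j)
  have hfp (θ : derivModule α) : ∀ i j, eval p (f i θ) = eval p (f j θ) := by
    refine eval_eq_of_dvd_sum hv (fun j => (hp (e j)).2 (.inr ⟨j, rfl⟩)) hc ?_
    have hdvd := mem_derivModule.1 θ.2 k
    rw [hk, derMap_linForm_sum_smul] at hdvd
    simpa only [Function.comp_apply, hf] using hdvd
  have hsurj := fibreMap_surjective hk hc hp hv hu hm hf hfp
  have hle := (finrank_le_finrank_of_surjective_semilinear _ hsurj).trans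
    (derivModule α).finrank_le
  simp at hle

end Circuit

/-- The derivation module of 𝒜_𝔄 is not a free `S`-module. -/
theorem not_free_AFrakA : ¬ Module.Free S4 ↥(derivModule AFrakA) := by
  have hs : s - 1 + 2 ≠ 0 := fun h => by
    have hre := congrArg Complex.re h
    norm_num [s] at hre
  refine not_free_derivModule_of_circuit (e := ![2, 3, 4]) (k := 5) (c := ![1, -1, 1])
    (p := ![1, -1, 0, 0]) ?_ ?_ ?_ ?_
  · refine Fintype.linearIndependent_iff.2 fun g hg => ?_
    have hz : g 0 = 0 := by simpa [AFrakA, Fin.sum_univ_three] using congrFun hg 2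
    have hw : g 1 = 0 := by simpa [AFrakA, Fin.sum_univ_three] using congrFun hg 3
    have hxy : g 2 = 0 := by simpa [AFrakA, Fin.sum_univ_three] using congrFun hg 0
    simp [Fin.forall_fin_succ, hz, hw, hxy]
  · ext i
    fin_cases i <;> simp [AFrakA, Fin.sum_univ_three]
  · simp [Fin.forall_fin_succ]
  · intro i
    fin_cases i <;> simp [AFrakA, hs]
end

section
/- Let f = x·y·z·w·(x+y)·(y+z)·(y−w)·(x−y−z+w) ∈ S = ℂ[x,y,z,w] (the defining polynomial of the rigid Cynk–Szemberg arrangement 𝒜₃). The S-module AR(f) = {(a₁,a₂,a₃,a₄) ∈ S⁴ : a₁∂ₓf + a₂∂_yf + a₃∂_zf + a₄∂_wf = 0} is generated by five homogeneous syzygies, each of degree 3, and every nonzero homogeneous element of AR(f) has degree at least 3. -/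
open MvPolynomial

/-- The defining polynomial of the rigid Cynk–Szemberg arrangement 𝒜₃:
`f = xyzw(x+y)(y+z)(y-w)(x-y-z+w)`. -/
noncomputable def fQ3 : S4 :=
  X 0 * X 1 * X 2 * X 3 * (X 0 + X 1) * (X 1 + X 2) * (X 1 - X 3) * (X 0 - X 1 - X 2 + X 3)

/-!
A derivation killing `f` is logarithmic along each of the eight hyperplanes, because their
equations are pairwise coprime. Writing `ℓ = x - y - z + w`, the conditions along the seven
hyperplanes other than `ℓ = 0` say that, up to a multiple of the Euler derivation `E`, it equals
`δ = x(x+y)p ∂ₓ + z(y+z)q ∂_z + w(y-w)r ∂_w`, and the condition along `ℓ` says that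
`x(x+y)p - z(y+z)q + w(y-w)r = ℓm` for some `m`. The multiple of `E` is then forced by `E f = 8 f`,
so `AR(f)` is a linear image of the module of such relations `(p, q, r, m)`.

Modulo `ℓ`, with `u = y+z-w`, `v = y-w`, `t = y+z`, such a relation becomes
`uv(p-r) + ut(p-q) + vt(q+r) = 0`. As `u`, `v`, `t` are pairwise coprime, its solutions are spanned
by two linear ones, which together with the three Koszul relations modulo `ℓ` gives the
five generators.
-/

namespace CynkSzemberg

section Coprimality

variable {A : Type*} [CommRing A] [DecompositionMonoid A]

theorem dvd_derivation_of_dvd_derivation_mul {R : Type*} [CommSemiring R] [Algebra R A]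
    (D : Derivation R A A) {l g : A} (hlg : IsRelPrime l g) (h : l ∣ D (l * g)) : l ∣ D l := by
  rw [D.leibniz, smul_eq_mul, smul_eq_mul, dvd_add_right (dvd_mul_right l _)] at h
  exact hlg.dvd_of_dvd_mul_left h

theorem dvd_derivation_of_dvd_derivation_prod {R ι : Type*} [CommSemiring R] [Algebra R A]
    [Fintype ι] (D : Derivation R A A) {l : ι → A} (hl : Pairwise (Function.onFun IsRelPrime l))
    (h : ∏ i, l i ∣ D (∏ i, l i)) (i : ι) : l i ∣ D (l i) := by
  classical
  rw [← Finset.mul_prod_erase _ l (Finset.mem_univ i)] at h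
  have hrest : IsRelPrime (l i) (∏ j ∈ Finset.univ.erase i, l j) :=
    IsRelPrime.prod_right fun j hj => hl (Finset.ne_of_mem_erase hj).symm
  exact dvd_derivation_of_dvd_derivation_mul D hrest ((dvd_mul_right _ _).trans h)

theorem dvd_sub_of_dvd_mul_add_mul {l a b c d : A} (hla : IsRelPrime l a) (hab : l ∣ a + b)
    (h : l ∣ c * a + d * b) : l ∣ c - d := by
  refine hla.dvd_of_dvd_mul_right ?_
  rw [show (c - d) * a = c * a + d * b - d * (a + b) by ring]
  exact dvd_sub h (hab.mul_left d)

theorem exists_eq_mul_of_mul_add_mul_add_mul_eq_zero [IsDomain A] {u v t P Q T : A}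
    (hv : v ≠ 0) (ht : t ≠ 0)
    (huv : IsRelPrime u v) (hut : IsRelPrime u t) (hvt : IsRelPrime v t)
    (h : u * v * P + u * t * Q + v * t * T = 0) :
    ∃ P₁ Q₁, P = t * P₁ ∧ Q = v * Q₁ ∧ T = -(u * (P₁ + Q₁)) := by
  obtain ⟨P₁, rfl⟩ : t ∣ P := (hut.symm.mul_right hvt.symm).dvd_of_dvd_mul_left
    ⟨-(u * Q + v * T), by linear_combination h⟩
  obtain ⟨Q₁, rfl⟩ : v ∣ Q := (huv.symm.mul_right hvt).dvd_of_dvd_mul_left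
    ⟨-(u * (t * P₁) + t * T), by linear_combination h⟩
  refine ⟨P₁, Q₁, rfl, rfl, mul_left_cancel₀ (mul_ne_zero hv ht) ?_⟩
  linear_combination h

end Coprimality

section Polynomials

theorem dvd_sub_aeval {σ R : Type*} [CommRing R] {l : MvPolynomial σ R}
    {s : σ → MvPolynomial σ R} (hs : ∀ i, l ∣ X i - s i) (p : MvPolynomial σ R) :
    l ∣ p - aeval s p := by
  let π := Ideal.Quotient.mkₐ R (Ideal.span {l})
  have hπ : π.comp (aeval s) = π := by
    ext i
    simpa [π] using (Ideal.Quotient.eq.2 (Ideal.mem_span_singleton.2 (hs i))).symm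
  exact Ideal.mem_span_singleton.1 (Ideal.Quotient.eq.1 (AlgHom.congr_fun hπ p).symm)

variable {σ R : Type*} [CommSemiring R]

theorem mem_pow_idealOfVars_of_isHomogeneous {p : MvPolynomial σ R} {n : ℕ}
    (hp : p.IsHomogeneous n) : p ∈ idealOfVars σ R ^ n :=
  (mem_pow_idealOfVars_iff' n p).2 fun _ hm => hp.coeff_eq_zero hm.ne

theorem le_of_isHomogeneous_of_mem_pow_idealOfVars {p : MvPolynomial σ R} {n d : ℕ}
    (hp : p.IsHomogeneous d) (hp₀ : p ≠ 0) (h : p ∈ idealOfVars σ R ^ n) : n ≤ d := by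
  obtain ⟨m, hm⟩ := ne_zero_iff.1 hp₀
  by_contra! hdn
  refine hm ((mem_pow_idealOfVars_iff' n p).1 h m ?_)
  rwa [not_imp_comm.1 hp.coeff_eq_zero hm]

theorem le_of_isHomogeneous_of_mem_span {ι κ : Type*} {g : κ → ι → MvPolynomial σ R} {n d : ℕ}
    (hg : ∀ j i, (g j i).IsHomogeneous n) {a : ι → MvPolynomial σ R}
    (ha : a ∈ Submodule.span (MvPolynomial σ R) (Set.range g)) (ha₀ : a ≠ 0)
    (hd : ∀ i, (a i).IsHomogeneous d) : n ≤ d := by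
  have hspan : Submodule.span (MvPolynomial σ R) (Set.range g) ≤
      Submodule.pi Set.univ fun _ => idealOfVars σ R ^ n := by
    rw [Submodule.span_le]
    rintro _ ⟨j, rfl⟩ i -
    exact mem_pow_idealOfVars_of_isHomogeneous (hg j i)
  obtain ⟨i, hi⟩ := Function.ne_iff.1 ha₀
  exact le_of_isHomogeneous_of_mem_pow_idealOfVars (hd i) hi (hspan ha i trivial)

end Polynomials

section LinearForms

theorem linForm_eq_sumSMulX (c : Fin 4 → ℂ) :
    linForm c = sumSMulX (Finsupp.equivFunOnFinite.symm c) := by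
  simp [linForm, sumSMulX, Finsupp.linearCombination_apply, Finsupp.sum_fintype, smul_eq_C_mul]

theorem coeff_linForm (c : Fin 4 → ℂ) (i : Fin 4) :
    coeff (Finsupp.single i 1) (linForm c) = c i := by
  rw [linForm_eq_sumSMulX, coeff_sumSMulX, Finsupp.equivFunOnFinite_symm_apply_apply]

theorem isHomogeneous_linForm (c : Fin 4 → ℂ) : (linForm c).IsHomogeneous 1 :=
  IsHomogeneous.sum _ _ _ fun i _ => isHomogeneous_C_mul_X (c i) i

theorem irreducible_linForm {c : Fin 4 → ℂ} (hc : c ≠ 0) : Irreducible (linForm c) := by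
  obtain ⟨i, hi⟩ := Function.ne_iff.1 hc
  rw [linForm_eq_sumSMulX]
  exact irreducible_sumSMulX _ ⟨i, by simpa using hi⟩
    fun r hr => (ne_zero_of_dvd_ne_zero hi (hr i)).isUnit

theorem isRelPrime_linForm {c d : Fin 4 → ℂ} {i j : Fin 4} (h : c i * d j ≠ c j * d i) :
    IsRelPrime (linForm c) (linForm d) := by
  have hc : c ≠ 0 := by rintro rfl; simp at h
  have hd : d ≠ 0 := by rintro rfl; simp at h
  rw [(irreducible_linForm hc).isRelPrime_iff_not_dvd,
    (irreducible_linForm hc).dvd_irreducible_iff_associated (irreducible_linForm hd)]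
  rintro ⟨ε, hε⟩
  obtain ⟨r, -, hr⟩ := isUnit_iff_eq_C_of_isReduced.1 ε.isUnit
  have hcd : ∀ k, d k = c k * r := fun k => by
    rw [← coeff_linForm d, ← hε, hr, mul_comm, coeff_C_mul, coeff_linForm, mul_comm]
  exact h (by rw [hcd, hcd]; ring)

end LinearForms

section Derivations

theorem derMap_eq_mkDerivation (f : S4) (a : Fin 4 → S4) : derMap f a = mkDerivation ℂ a f := by
  have h : mkDerivation ℂ a = ∑ i, a i • pderiv (R := ℂ) i :=
    derivation_ext fun j => by fin_cases j <;> simp [Fin.sum_univ_four, pderiv_X]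
  simp [h, derMap, Fin.sum_univ_four]

theorem derMap_X {f : S4} {n : ℕ} (hf : f.IsHomogeneous n) : derMap f X = n • f :=
  hf.sum_X_mul_pderiv

theorem mem_derivModule {ι : Type} {α : ι → Fin 4 → ℂ} {a : Fin 4 → S4} :
    a ∈ derivModule α ↔ ∀ H, linForm (α H) ∣ derMap (linForm (α H)) a := by
  simp [derivModule, Ideal.mem_span_singleton]

theorem ker_derMap_prod_le_derivModule {ι : Type} [Fintype ι] {α : ι → Fin 4 → ℂ}
    (hα : Pairwise (Function.onFun IsRelPrime fun H => linForm (α H))) :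
    LinearMap.ker (derMap (∏ H, linForm (α H))) ≤ derivModule α := by
  intro a ha
  rw [LinearMap.mem_ker, derMap_eq_mkDerivation] at ha
  refine mem_derivModule.2 fun H => ?_
  rw [derMap_eq_mkDerivation]
  exact dvd_derivation_of_dvd_derivation_prod _ hα (ha ▸ dvd_zero _) H

end Derivations

section Arrangement

local notation "x" => (X 0 : S4)
local notation "y" => (X 1 : S4)
local notation "z" => (X 2 : S4)
local notation "w" => (X 3 : S4)

/-- The linear form `ℓ = x - y - z + w`. -/
noncomputable def ell : S4 := x - y - z + w

/-- Normal vectors of the eight hyperplanes of the arrangement `𝒜₃`. They are kept integral so that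
their `2 × 2` minors are decidable. -/
def normals : Fin 8 → Fin 4 → ℤ :=
  ![![1, 0, 0, 0], ![0, 1, 0, 0], ![0, 0, 1, 0], ![0, 0, 0, 1],
    ![1, 1, 0, 0], ![0, 1, 1, 0], ![0, 1, 0, -1], ![1, -1, -1, 1]]

/-- The arrangement `𝒜₃`, as a family of complex coefficient vectors. -/
def arrangement (H : Fin 8) (i : Fin 4) : ℂ := normals H i

theorem linForm_arrangement (H : Fin 8) :
    linForm (arrangement H) = ![x, y, z, w, x + y, y + z, y - w, ell] H := by
  fin_cases H <;> simp only [linForm, arrangement, normals, ell, map_intCast, Fin.sum_univ_four,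
    Fin.zero_eta, Fin.mk_one, Fin.reduceFinMk, Matrix.cons_val] <;> push_cast <;> ring

theorem fQ3_eq_prod : fQ3 = ∏ H, linForm (arrangement H) := by
  simp [linForm_arrangement, Fin.prod_univ_eight, fQ3, ell]

theorem isHomogeneous_fQ3 : fQ3.IsHomogeneous 8 := by
  rw [fQ3_eq_prod]
  exact IsHomogeneous.prod _ _ (fun _ => 1) fun H _ => isHomogeneous_linForm _

theorem exists_normals_minor_ne :
    ∀ H K, H ≠ K → ∃ i j, normals H i * normals K j ≠ normals H j * normals K i := by
  decide

theorem isRelPrime_arrangement :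
    Pairwise (Function.onFun IsRelPrime fun H => linForm (arrangement H)) := by
  intro H K hHK
  obtain ⟨i, j, hij⟩ := exists_normals_minor_ne H K hHK
  exact isRelPrime_linForm (i := i) (j := j) (by unfold arrangement; exact_mod_cast hij)

theorem arrangement_ne_zero (H : Fin 8) : arrangement H ≠ 0 := by
  obtain ⟨i, hi⟩ : ∃ i, normals H i ≠ 0 := by revert H; decide
  exact Function.ne_iff.2 ⟨i, Int.cast_ne_zero.2 hi⟩

theorem linForm_arrangement_ne_zero (H : Fin 8) : linForm (arrangement H) ≠ 0 :=
  (irreducible_linForm (arrangement_ne_zero H)).ne_zero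

/-- The derivation `δ = x(x+y)p ∂ₓ + z(y+z)q ∂_z + w(y-w)r ∂_w` attached to `c = (p, q, r, m)`. It
is logarithmic along every hyperplane of the arrangement except possibly `ℓ = 0`, and there too when
`c` is a relation; the entry `m` is then the quotient `δ(ℓ) / ℓ`. -/
noncomputable def logDer : (Fin 4 → S4) →ₗ[S4] (Fin 4 → S4) :=
  LinearMap.pi ![(x * (x + y)) • LinearMap.proj 0, 0, (z * (y + z)) • LinearMap.proj 1,
    (w * (y - w)) • LinearMap.proj 2]

theorem logDer_apply (c : Fin 4 → S4) :
    logDer c = ![x * (x + y) * c 0, 0, z * (y + z) * c 1, w * (y - w) * c 2] := by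
  ext1 i
  fin_cases i <;> rfl

/-- The module of relations `(p, q, r, m)` with `x(x+y)p - z(y+z)q + w(y-w)r = ℓm`. -/
noncomputable def relations : Submodule S4 (Fin 4 → S4) :=
  LinearMap.ker (Fintype.linearCombination S4 ![x * (x + y), -(z * (y + z)), w * (y - w), -ell])

theorem mem_relations {c : Fin 4 → S4} : c ∈ relations ↔
    x * (x + y) * c 0 - z * (y + z) * c 1 + w * (y - w) * c 2 = ell * c 3 := by
  rw [relations, LinearMap.mem_ker, ← sub_eq_zero (b := ell * c 3)]
  simp only [Fintype.linearCombination_apply, Fin.sum_univ_four, smul_eq_mul, Matrix.cons_val]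
  ring_nf

theorem ell_ne_zero : ell ≠ 0 := by
  simpa [linForm_arrangement] using linForm_arrangement_ne_zero 7

theorem eq_of_mem_relations {c c' : Fin 4 → S4} (hc : c ∈ relations) (hc' : c' ∈ relations)
    (h₀ : c 0 = c' 0) (h₁ : c 1 = c' 1) (h₂ : c 2 = c' 2) : c = c' := by
  rw [mem_relations] at hc hc'
  have h₃ : c 3 = c' 3 := mul_left_cancel₀ ell_ne_zero (by rw [← hc, ← hc', h₀, h₁, h₂])
  ext1 i
  fin_cases i <;> assumption

theorem mem_derivModule_arrangement {a : Fin 4 → S4} : a ∈ derivModule arrangement ↔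
    x ∣ a 0 ∧ y ∣ a 1 ∧ z ∣ a 2 ∧ w ∣ a 3 ∧ x + y ∣ a 0 + a 1 ∧ y + z ∣ a 1 + a 2 ∧
      y - w ∣ a 1 - a 3 ∧ ell ∣ a 0 - a 1 - a 2 + a 3 := by
  simp [mem_derivModule, linForm_arrangement, derMap_eq_mkDerivation, Fin.forall_fin_succ, ell]

theorem exists_eq_logDer_add_smul_X {a : Fin 4 → S4} (ha : a ∈ derivModule arrangement) :
    ∃ c ∈ relations, ∃ b : S4, a = logDer c + b • X := by
  obtain ⟨⟨b₀, h₀⟩, ⟨b, h₁⟩, ⟨b₂, h₂⟩, ⟨b₃, h₃⟩, h₄, h₅, h₆, m, h₇⟩ :=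
    mem_derivModule_arrangement.1 ha
  have hrel₄ : IsRelPrime (x + y) x := by
    simpa [Function.onFun, linForm_arrangement] using @isRelPrime_arrangement 4 0 (by decide)
  have hrel₅ : IsRelPrime (y + z) z := by
    simpa [Function.onFun, linForm_arrangement] using @isRelPrime_arrangement 5 2 (by decide)
  have hrel₆ : IsRelPrime (y - w) w := by
    simpa [Function.onFun, linForm_arrangement] using @isRelPrime_arrangement 6 3 (by decide)
  obtain ⟨p, hp⟩ : x + y ∣ b₀ - b := dvd_sub_of_dvd_mul_add_mul hrel₄ dvd_rfl <| by
    rwa [mul_comm, mul_comm b, ← h₀, ← h₁]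
  obtain ⟨q, hq⟩ : y + z ∣ b₂ - b := dvd_sub_of_dvd_mul_add_mul hrel₅ (by rw [add_comm]) <| by
    rwa [mul_comm, mul_comm b, ← h₂, ← h₁, add_comm (a 2)]
  obtain ⟨r, hr⟩ : y - w ∣ b₃ - b := dvd_sub_of_dvd_mul_add_mul hrel₆
    (b := -y) ⟨-1, by ring⟩ <| by
      rwa [mul_comm, mul_neg, mul_comm b, ← h₃, ← h₁, ← sub_eq_add_neg, dvd_sub_comm]
  refine ⟨![p, q, r, m - b], mem_relations.2 ?_, b, ?_⟩
  · rw [ell] at h₇ ⊢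
    simp only [Matrix.cons_val]
    linear_combination h₇ - h₀ - x * hp + h₁ + h₂ + z * hq - h₃ - w * hr
  · ext1 i
    fin_cases i <;> simp only [logDer_apply, Pi.add_apply, Pi.smul_apply, smul_eq_mul,
      Fin.zero_eta, Fin.mk_one, Fin.reduceFinMk, Matrix.cons_val]
    · linear_combination h₀ + x * hp
    · linear_combination h₁
    · linear_combination h₂ + z * hq
    · linear_combination h₃ + w * hr

/-- The quotient `δ(f) / f` for `δ = logDer c` and `c` a relation: the sum of the quotients
`δ(α) / α` over the linear factors `α` of `f`. -/
noncomputable def logQuotient : (Fin 4 → S4) →ₗ[S4] S4 :=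
  Fintype.linearCombination S4 ![x + (x + y), z + (y + z), (y - w) - w, 1]

theorem logQuotient_apply (c : Fin 4 → S4) : logQuotient c =
    (x + (x + y)) * c 0 + (z + (y + z)) * c 1 + ((y - w) - w) * c 2 + c 3 := by
  simp [logQuotient, Fintype.linearCombination_apply, Fin.sum_univ_four, mul_comm]

theorem derMap_fQ3_logDer {c : Fin 4 → S4} (hc : c ∈ relations) :
    derMap fQ3 (logDer c) = logQuotient c * fQ3 := by
  rw [mem_relations, ell] at hc
  simp only [derMap_eq_mkDerivation, fQ3, Derivation.leibniz, map_add, map_sub, mkDerivation_X,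
    logDer_apply, logQuotient_apply, smul_eq_mul, Matrix.cons_val]
  linear_combination x * y * z * w * (x + y) * (y + z) * (y - w) * hc

/-- The combination `8δ - (δ(f) / f) E` of `δ = logDer c` and the Euler derivation `E = X`, which
kills `f` when `c` is a relation because `E f = 8 f`. -/
noncomputable def syz : (Fin 4 → S4) →ₗ[S4] (Fin 4 → S4) :=
  (8 : S4) • logDer - logQuotient.smulRight X

theorem syz_apply (c : Fin 4 → S4) : syz c = (8 : S4) • logDer c - logQuotient c • X :=
  rfl

theorem ker_derMap_fQ3_le_derivModule : LinearMap.ker (derMap fQ3) ≤ derivModule arrangement := by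
  rw [fQ3_eq_prod]
  exact ker_derMap_prod_le_derivModule isRelPrime_arrangement

theorem fQ3_ne_zero : fQ3 ≠ 0 := by
  rw [fQ3_eq_prod]
  exact Finset.prod_ne_zero_iff.2 fun H _ => linForm_arrangement_ne_zero H

theorem ker_derMap_fQ3 : LinearMap.ker (derMap fQ3) = relations.map syz := by
  have hE : derMap fQ3 X = 8 * fQ3 := by simpa using derMap_X isHomogeneous_fQ3
  apply le_antisymm
  · intro a ha
    obtain ⟨c, hc, b, rfl⟩ := exists_eq_logDer_add_smul_X (ker_derMap_fQ3_le_derivModule ha)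
    have hb : logQuotient c + 8 * b = 0 := by
      refine (mul_eq_zero.1 ?_).resolve_right fQ3_ne_zero
      rw [LinearMap.mem_ker, map_add, map_smul, hE, derMap_fQ3_logDer hc, smul_eq_mul] at ha
      linear_combination ha
    have hsyz : syz c = (8 : ℂ) • (logDer c + b • X) := by
      rw [syz_apply, eq_neg_of_add_eq_zero_left hb, neg_smul, sub_neg_eq_add, mul_smul, ← smul_add]
      simp only [ofNat_smul_eq_nsmul]
    exact ((relations.map syz).smul_mem_iff (by norm_num)).1 ⟨c, hc, hsyz⟩
  · rintro _ ⟨c, hc, rfl⟩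
    rw [LinearMap.mem_ker, syz_apply, map_sub, map_smul, map_smul, hE, derMap_fQ3_logDer hc,
      smul_eq_mul, smul_eq_mul]
    ring

/-- Generators of `relations`: the three Koszul relations between a coefficient and `ℓ`, and the
lifts of the two linear relations that hold modulo `ℓ`. -/
noncomputable def relationGens : Fin 5 → Fin 4 → S4 :=
  ![![ell, 0, 0, x * (x + y)], ![0, ell, 0, -(z * (y + z))], ![0, 0, ell, w * (y - w)],
    ![w, w, -((y + z) + (y + z - w)), w * (x + y + (y + z - w))],
    ![z, (y - w) + (y + z - w), z, z * (x + y + (y + z - w))]]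

theorem relationGens_mem (j : Fin 5) : relationGens j ∈ relations := by
  rw [mem_relations]
  fin_cases j <;> simp only [relationGens, ell, Fin.zero_eta, Fin.mk_one, Fin.reduceFinMk,
    Matrix.cons_val] <;> ring

theorem exists_eq_mul_of_relation_mod_ell {P Q T : S4} (h : (y + z - w) * (y - w) * P +
    (y + z - w) * (y + z) * Q + (y - w) * (y + z) * T = 0) :
    ∃ P₁ Q₁, P = (y + z) * P₁ ∧ Q = (y - w) * Q₁ ∧ T = -((y + z - w) * (P₁ + Q₁)) := by
  have hv : y - w ≠ 0 := by simpa [linForm_arrangement] using linForm_arrangement_ne_zero 6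
  have ht : y + z ≠ 0 := by simpa [linForm_arrangement] using linForm_arrangement_ne_zero 5
  have hu : linForm ![0, 1, 1, -1] = y + z - w := by
    simp [linForm, Fin.sum_univ_four, sub_eq_add_neg]
  have huv : IsRelPrime (y + z - w) (y - w) := by
    simpa [hu, linForm_arrangement] using isRelPrime_linForm (c := ![0, 1, 1, -1])
      (d := arrangement 6) (i := 1) (j := 2) (by simp [arrangement, normals])
  have hut : IsRelPrime (y + z - w) (y + z) := by
    simpa [hu, linForm_arrangement] using isRelPrime_linForm (c := ![0, 1, 1, -1])
      (d := arrangement 5) (i := 1) (j := 3) (by simp [arrangement, normals])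
  have hvt : IsRelPrime (y - w) (y + z) := by
    simpa [Function.onFun, linForm_arrangement] using @isRelPrime_arrangement 6 5 (by decide)
  exact exists_eq_mul_of_mul_add_mul_add_mul_eq_zero hv ht huv hut hvt h

theorem exists_sub_eq_of_mem_relations {c : Fin 4 → S4} (hc : c ∈ relations) :
    ∃ P₁ Q₁ P₂ Q₂ T₂ : S4, c 0 - c 2 = (y + z) * P₁ + ell * P₂ ∧
      c 0 - c 1 = (y - w) * Q₁ + ell * Q₂ ∧
      c 1 + c 2 = -((y + z - w) * (P₁ + Q₁)) + ell * T₂ := by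
  let φ : S4 →ₐ[ℂ] S4 := aeval ![y + z - w, y, z, w]
  have hφ : ∀ g, ell ∣ g - φ g := dvd_sub_aeval fun i => by
    fin_cases i
    · exact ⟨1, by simp only [ell, Fin.zero_eta, Matrix.cons_val]; ring⟩
    all_goals simp
  have hker : (y + z - w) * (y - w) * φ (c 0 - c 2) + (y + z - w) * (y + z) * φ (c 0 - c 1) +
      (y - w) * (y + z) * φ (c 1 + c 2) = 0 := by
    have h := congrArg φ (mem_relations.1 hc)
    simp only [φ, ell, map_add, map_sub, map_mul, aeval_X, Matrix.cons_val] at h ⊢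
    linear_combination h
  obtain ⟨P₁, Q₁, hP, hQ, hT⟩ := exists_eq_mul_of_relation_mod_ell hker
  obtain ⟨P₂, hP₂⟩ := hφ (c 0 - c 2)
  obtain ⟨Q₂, hQ₂⟩ := hφ (c 0 - c 1)
  obtain ⟨T₂, hT₂⟩ := hφ (c 1 + c 2)
  refine ⟨P₁, Q₁, P₂, Q₂, T₂, ?_, ?_, ?_⟩
  · rw [← hP, ← hP₂, add_sub_cancel]
  · rw [← hQ, ← hQ₂, add_sub_cancel]
  · rw [← hT, ← hT₂, add_sub_cancel]

theorem span_relationGens : Submodule.span S4 (Set.range relationGens) = relations := by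
  apply le_antisymm
  · rw [Submodule.span_le]
    rintro _ ⟨j, rfl⟩
    exact relationGens_mem j
  · intro c hc
    obtain ⟨P₁, Q₁, P₂, Q₂, T₂, hP, hQ, hT⟩ := exists_sub_eq_of_mem_relations hc
    let b : Fin 5 → S4 := ![P₂ + Q₂ + T₂, P₂ - Q₂ + T₂, -P₂ + Q₂ + T₂, P₁, -Q₁]
    have hb : ∑ j, b j • relationGens j ∈ relations :=
      sum_mem fun j _ => Submodule.smul_mem _ _ (relationGens_mem j)
    have h2c : 2 • c = ∑ j, b j • relationGens j := by
      refine eq_of_mem_relations (nsmul_mem hc 2) hb ?_ ?_ ?_ <;>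
        simp only [Fin.sum_univ_five, relationGens, b, Pi.add_apply, Pi.smul_apply, smul_eq_mul,
          nsmul_eq_mul, Nat.cast_ofNat, Matrix.cons_val]
      · linear_combination hP + hQ + hT
      · linear_combination hP - hQ + hT
      · linear_combination -hP + hQ + hT
    refine (Submodule.smul_mem_iff _ (s := (2 : ℂ)) two_ne_zero).1 ?_
    rw [ofNat_smul_eq_nsmul, h2c]
    exact sum_mem fun j _ => Submodule.smul_mem _ _ (Submodule.subset_span ⟨j, rfl⟩)

theorem isHomogeneous_relationGens (j : Fin 5) (i : Fin 4) :
    (relationGens j i).IsHomogeneous (![1, 1, 1, 2] i) := by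
  have hX : ∀ k, (X k : S4).IsHomogeneous 1 := isHomogeneous_X ℂ
  have hu := ((hX 1).add (hX 2)).sub (hX 3)
  have hxy := (hX 0).add (hX 1)
  have hyz := (hX 1).add (hX 2)
  have hyw := (hX 1).sub (hX 3)
  have hell : ell.IsHomogeneous 1 := (((hX 0).sub (hX 1)).sub (hX 2)).add (hX 3)
  fin_cases j <;> fin_cases i
  exacts [hell, isHomogeneous_zero _ _ _, isHomogeneous_zero _ _ _, (hX 0).mul hxy,
    isHomogeneous_zero _ _ _, hell, isHomogeneous_zero _ _ _, ((hX 2).mul hyz).neg,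
    isHomogeneous_zero _ _ _, isHomogeneous_zero _ _ _, hell, (hX 3).mul hyw,
    hX 3, hX 3, (hyz.add hu).neg, (hX 3).mul (hxy.add hu),
    hX 2, hyw.add hu, hX 2, (hX 2).mul (hxy.add hu)]

theorem isHomogeneous_logDer {c : Fin 4 → S4} (hc : ∀ i, (c i).IsHomogeneous (![1, 1, 1, 2] i))
    (i : Fin 4) : (logDer c i).IsHomogeneous 3 := by
  have hX : ∀ k, (X k : S4).IsHomogeneous 1 := isHomogeneous_X ℂ
  rw [logDer_apply]
  fin_cases i
  · exact ((hX 0).mul ((hX 0).add (hX 1))).mul (hc 0)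
  · exact isHomogeneous_zero _ _ _
  · exact ((hX 2).mul ((hX 1).add (hX 2))).mul (hc 1)
  · exact ((hX 3).mul ((hX 1).sub (hX 3))).mul (hc 2)

theorem isHomogeneous_logQuotient {c : Fin 4 → S4}
    (hc : ∀ i, (c i).IsHomogeneous (![1, 1, 1, 2] i)) : (logQuotient c).IsHomogeneous 2 := by
  have hX : ∀ k, (X k : S4).IsHomogeneous 1 := isHomogeneous_X ℂ
  rw [logQuotient_apply]
  exact (((((hX 0).add ((hX 0).add (hX 1))).mul (hc 0)).add
    (((hX 2).add ((hX 1).add (hX 2))).mul (hc 1))).add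
    ((((hX 1).sub (hX 3)).sub (hX 3)).mul (hc 2))).add (hc 3)

theorem isHomogeneous_syz {c : Fin 4 → S4} (hc : ∀ i, (c i).IsHomogeneous (![1, 1, 1, 2] i))
    (i : Fin 4) : (syz c i).IsHomogeneous 3 := by
  rw [syz_apply, ← map_ofNat (C : ℂ →+* S4) 8]
  exact ((isHomogeneous_logDer hc i).C_mul 8).sub
    ((isHomogeneous_logQuotient hc).mul (isHomogeneous_X ℂ i))

theorem span_syz_relationGens :
    Submodule.span S4 (Set.range (syz ∘ relationGens)) = LinearMap.ker (derMap fQ3) := by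
  rw [Set.range_comp, Submodule.span_image, span_relationGens, ker_derMap_fQ3]

end Arrangement

end CynkSzemberg

/-- The module `AR(f) = {(a₁,a₂,a₃,a₄) : a₁∂ₓf + a₂∂_yf + a₃∂_zf + a₄∂_wf = 0}`
for `f = xyzw(x+y)(y+z)(y-w)(x-y-z+w)` is generated by five homogeneous syzygies, each of
degree `3`, and every nonzero homogeneous element of `AR(f)` has degree at least `3`. -/
theorem AR_Q3_generators :
    (∃ g : Fin 5 → (Fin 4 → S4),
      Submodule.span S4 (Set.range g) = LinearMap.ker (derMap fQ3) ∧
      ∀ j : Fin 5, ∀ i : Fin 4, (g j i).IsHomogeneous 3) ∧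
    ∀ a ∈ LinearMap.ker (derMap fQ3), a ≠ 0 →
      ∀ d : ℕ, (∀ i : Fin 4, (a i).IsHomogeneous d) → 3 ≤ d := by
  have hsyz := fun j => CynkSzemberg.isHomogeneous_syz (CynkSzemberg.isHomogeneous_relationGens j)
  refine ⟨⟨_, CynkSzemberg.span_syz_relationGens, hsyz⟩, fun a ha ha₀ d hd => ?_⟩
  rw [← CynkSzemberg.span_syz_relationGens] at ha
  exact CynkSzemberg.le_of_isHomogeneous_of_mem_span hsyz ha ha₀ hd
end
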